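/- arXiv:2402.15545 — 3 statements merged into one kernel-verified Lean document; each statement's English description precedes it below -/
import Mathlib

section
/- Let ℓ > 0 and let u be a classical solution of the rB equation on [0,T). If there exists x₀ ∈ ℝ with u_0'(x₀) < 0, then T ≤ −2/u_0'(x₀). In particular, if inf_x u_0'(x) < 0 then T ≤ −2/inf_x u_0'(x). -/
open MeasureTheory Set Filter

/-- The nonlocal term `P(t,·) = 𝔊_ℓ ∗ (½ u_x(t,·)²)` of the regularised Burgers equation,
where `𝔊_ℓ(x) = (2ℓ)⁻¹ exp(−|x|/ℓ)`. -/
noncomputable def rbP (ℓ : ℝ) (ux : ℝ → ℝ → ℝ) (t x : ℝ) : ℝ :=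
  ∫ y : ℝ, (2 * ℓ)⁻¹ * Real.exp (-|x - y| / ℓ) * (ux t y ^ 2 / 2)

/-- A classical solution of the regularised Burgers equation
`u_t + u u_x + ℓ² P_x = 0` on `[0,T)`:  `u` is jointly `C²`, `u, u_x, u_{xx}` are bounded
on `[0,t] × ℝ` for every `t < T`, `u_x(t,·)` is square-integrable for every `t < T`,
and the equation holds pointwise.  Here `ut, ux, uxx` denote the partial derivatives of `u`
and `Px` the spatial derivative of `P = rbP ℓ ux`. -/
structure IsClassicalSolRB (ℓ T : ℝ) (u ut ux uxx Px : ℝ → ℝ → ℝ) : Prop where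
  smooth : ContDiffOn ℝ 2 (fun p : ℝ × ℝ => u p.1 p.2) (Set.Ico 0 T ×ˢ Set.univ)
  hut : ∀ t ∈ Set.Ico (0 : ℝ) T, ∀ x : ℝ, HasDerivAt (fun s => u s x) (ut t x) t
  hux : ∀ t ∈ Set.Ico (0 : ℝ) T, ∀ x : ℝ, HasDerivAt (fun y => u t y) (ux t x) x
  huxx : ∀ t ∈ Set.Ico (0 : ℝ) T, ∀ x : ℝ, HasDerivAt (fun y => ux t y) (uxx t x) x
  bounded : ∀ t ∈ Set.Ico (0 : ℝ) T, ∃ C : ℝ, ∀ s ∈ Set.Icc (0 : ℝ) t, ∀ x : ℝ,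
      |u s x| ≤ C ∧ |ux s x| ≤ C ∧ |uxx s x| ≤ C
  sqInt : ∀ t ∈ Set.Ico (0 : ℝ) T, MeasureTheory.Integrable (fun x : ℝ => ux t x ^ 2)
  hPx : ∀ t ∈ Set.Ico (0 : ℝ) T, ∀ x : ℝ, HasDerivAt (fun y => rbP ℓ ux t y) (Px t x) x
  eqn : ∀ t ∈ Set.Ico (0 : ℝ) T, ∀ x : ℝ, ut t x + u t x * ux t x + ℓ ^ 2 * Px t x = 0

/-!
Differentiating the equation in `x` and using `P - ℓ² P_xx = ½ u_x²` (the kernel is the Green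
function of `1 - ℓ² ∂_x²`, `exists_second_deriv_expConv`) gives
`u_xt + u u_xx = -½ u_x² - P`. Hence along a characteristic `η' = u(t, η)`, `η(0) = x₀`, the slope
`v(t) = u_x(t, η(t))` satisfies `v' = -½ v² - P ≤ -½ v²`, because `P ≥ 0`. If `v(0) < 0`, then `v`
stays negative and `1/v - t/2` is nondecreasing, so `1/v(0) + t/2 ≤ 1/v(t) < 0`, that is
`t < -2/v(0)`, for every `t < T`.

Characteristics exist on each `[0, T₁]` with `T₁ < T`, since there `u` and `u_x` are bounded
(`exists_characteristic`). The existence of `u_xt` and the identity `u_xt = u_tx` come from the joint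
`C²` regularity at interior times; at `t = 0` only the continuity of `u_x` is needed.
-/

theorem hasDerivAt_setIntegral_Iic {g : ℝ → ℝ} (hg : Continuous g)
    (hi : ∀ x, IntegrableOn g (Iic x)) (x : ℝ) :
    HasDerivAt (fun x => ∫ y in Iic x, g y) (g x) x := by
  have h := (intervalIntegral.integral_hasDerivAt_right (hg.intervalIntegrable 0 x)
    (hg.stronglyMeasurableAtFilter _ _) hg.continuousAt).add_const (∫ y in Iic (0 : ℝ), g y)
  refine h.congr_of_eventuallyEq (Eventually.of_forall fun z => ?_)
  have := intervalIntegral.integral_Iic_sub_Iic (hi 0) (hi z)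
  simp only [← this, sub_add_cancel]

theorem hasDerivAt_setIntegral_Ioi {g : ℝ → ℝ} (hg : Continuous g)
    (hi : ∀ x, IntegrableOn g (Ioi x)) (x : ℝ) :
    HasDerivAt (fun x => ∫ y in Ioi x, g y) (-g x) x := by
  have h := (intervalIntegral.integral_hasDerivAt_right (hg.intervalIntegrable 0 x)
    (hg.stronglyMeasurableAtFilter _ _) hg.continuousAt).const_sub (∫ y in Ioi (0 : ℝ), g y)
  refine h.congr_of_eventuallyEq (Eventually.of_forall fun z => ?_)
  have := intervalIntegral.integral_interval_add_Ioi (hi 0) (hi z)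
  simp only [← this]
  ring

/-- The convolution `P` of a continuous integrable `f` with `(2ℓ)⁻¹ exp(-|x|/ℓ)` is twice
differentiable, with `P'' = (P - f)/ℓ²`; the function `Q` is `P'`. -/
theorem exists_second_deriv_expConv {ℓ : ℝ} (hℓ : 0 < ℓ) {f : ℝ → ℝ} (hf : Continuous f)
    (hfi : Integrable f) :
    ∃ Q : ℝ → ℝ, ∀ x,
      HasDerivAt (fun x => ∫ y, (2 * ℓ)⁻¹ * Real.exp (-|x - y| / ℓ) * f y) (Q x) x ∧
      HasDerivAt Q (((∫ y, (2 * ℓ)⁻¹ * Real.exp (-|x - y| / ℓ) * f y) - f x) / ℓ ^ 2) x := by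
  set a : ℝ → ℝ := fun y => Real.exp (y / ℓ) * f y with ha
  set b : ℝ → ℝ := fun y => Real.exp (-(y / ℓ)) * f y with hb
  have hac : Continuous a := by fun_prop
  have hbc : Continuous b := by fun_prop
  have hai : ∀ x, IntegrableOn a (Iic x) := by
    intro x
    refine (hfi.integrableOn (s := Iic x)).bdd_mul (c := Real.exp (x / ℓ))
      (by fun_prop) ?_
    refine (ae_restrict_mem measurableSet_Iic).mono fun y hy => ?_
    rw [Real.norm_eq_abs, Real.abs_exp]
    have : y ≤ x := hy
    gcongr
  have hbi : ∀ x, IntegrableOn b (Ioi x) := by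
    intro x
    refine (hfi.integrableOn (s := Ioi x)).bdd_mul (c := Real.exp (-(x / ℓ)))
      (by fun_prop) ?_
    refine (ae_restrict_mem measurableSet_Ioi).mono fun y hy => ?_
    rw [Real.norm_eq_abs, Real.abs_exp]
    have : x ≤ y := le_of_lt hy
    gcongr
  -- Splitting the integral at `x` makes the kernel a product of a function of `x` and one of `y`.
  set A : ℝ → ℝ := fun x => ∫ y in Iic x, a y with hA
  set B : ℝ → ℝ := fun x => ∫ y in Ioi x, b y with hB
  have key : ∀ x, (∫ y, (2 * ℓ)⁻¹ * Real.exp (-|x - y| / ℓ) * f y) =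
      (2 * ℓ)⁻¹ * (Real.exp (-(x / ℓ)) * A x + Real.exp (x / ℓ) * B x) := by
    intro x
    have e1 : EqOn (fun y => (2 * ℓ)⁻¹ * Real.exp (-|x - y| / ℓ) * f y)
        (fun y => (2 * ℓ)⁻¹ * Real.exp (-(x / ℓ)) * a y) (Iic x) := by
      intro y hy
      have hy' : 0 ≤ x - y := sub_nonneg.2 hy
      simp only [ha, abs_of_nonneg hy']
      rw [show -(x - y) / ℓ = -(x / ℓ) + y / ℓ by ring, Real.exp_add]
      ring
    have e2 : EqOn (fun y => (2 * ℓ)⁻¹ * Real.exp (-|x - y| / ℓ) * f y)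
        (fun y => (2 * ℓ)⁻¹ * Real.exp (x / ℓ) * b y) (Ioi x) := by
      intro y hy
      have hy' : x - y ≤ 0 := sub_nonpos.2 (le_of_lt hy)
      simp only [hb, abs_of_nonpos hy']
      rw [show - -(x - y) / ℓ = x / ℓ + -(y / ℓ) by ring, Real.exp_add]
      ring
    rw [← intervalIntegral.integral_Iic_add_Ioi (b := x)
      (IntegrableOn.congr_fun ((hai x).const_mul _) e1.symm measurableSet_Iic)
      (IntegrableOn.congr_fun ((hbi x).const_mul _) e2.symm measurableSet_Ioi),
      setIntegral_congr_fun measurableSet_Iic e1, setIntegral_congr_fun measurableSet_Ioi e2,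
      integral_const_mul, integral_const_mul]
    ring
  have hE : ∀ x, HasDerivAt (fun x : ℝ => Real.exp (x / ℓ)) (Real.exp (x / ℓ) * (1 / ℓ)) x :=
    fun x => ((hasDerivAt_id x).div_const ℓ).exp
  have hE' : ∀ x, HasDerivAt (fun x : ℝ => Real.exp (-(x / ℓ)))
      (Real.exp (-(x / ℓ)) * (-(1 / ℓ))) x :=
    fun x => ((hasDerivAt_id x).div_const ℓ).neg.exp
  have hdA := hasDerivAt_setIntegral_Iic hac hai
  have hdB := hasDerivAt_setIntegral_Ioi hbc hbi
  have hee : ∀ x : ℝ, Real.exp (-(x / ℓ)) * Real.exp (x / ℓ) = 1 := fun x => by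
    rw [← Real.exp_add]; simp
  simp only [key]
  refine ⟨fun x => (2 * ℓ ^ 2)⁻¹ *
    (Real.exp (x / ℓ) * B x - Real.exp (-(x / ℓ)) * A x), fun x => ⟨?_, ?_⟩⟩
  · refine ((((hE' x).mul (hdA x)).add ((hE x).mul (hdB x))).const_mul (2 * ℓ)⁻¹).congr_deriv ?_
    simp only [ha, hb]
    field_simp
    ring
  · refine ((((hE x).mul (hdB x)).sub ((hE' x).mul (hdA x))).const_mul
      (2 * ℓ ^ 2)⁻¹).congr_deriv ?_
    simp only [ha, hb]
    have := hee x
    field_simp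
    linear_combination (-2 * ℓ * f x) * this

/-- A velocity field that is bounded and has bounded slope on `[0,T₁] × ℝ` admits
characteristics on all of `[0,T₁]`. -/
theorem exists_characteristic {T₁ C : ℝ} (hT₁ : 0 ≤ T₁) {u ux : ℝ → ℝ → ℝ}
    (hc : ∀ x, ContinuousOn (fun t => u t x) (Icc 0 T₁))
    (hux : ∀ t ∈ Icc 0 T₁, ∀ x, HasDerivAt (u t) (ux t x) x)
    (hu : ∀ t ∈ Icc 0 T₁, ∀ x, |u t x| ≤ C) (hb : ∀ t ∈ Icc 0 T₁, ∀ x, |ux t x| ≤ C) (x₀ : ℝ) :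
    ∃ η : ℝ → ℝ, η 0 = x₀ ∧
      ∀ t ∈ Icc 0 T₁, HasDerivWithinAt η (u t (η t)) (Icc 0 T₁) t := by
  have hC : 0 ≤ C := (abs_nonneg _).trans (hu 0 ⟨le_rfl, hT₁⟩ 0)
  -- A path with speed at most `C` stays within `C * T₁` of `x₀`, so that Picard-Lindelöf on the ball
  -- of this radius reaches the whole interval.
  have hPL : IsPicardLindelof u (tmin := 0) (tmax := T₁) ⟨0, le_rfl, hT₁⟩ x₀
      (C.toNNReal * T₁.toNNReal) 0 C.toNNReal C.toNNReal := by
    refine ⟨fun t ht => ?_, fun x _ => hc x, fun t ht x _ => ?_, ?_⟩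
    · refine (lipschitzWith_of_nnnorm_deriv_le (fun x => (hux t ht x).differentiableAt)
        fun x => ?_).lipschitzOnWith
      rw [(hux t ht x).deriv, ← NNReal.coe_le_coe, Real.coe_toNNReal _ hC]
      exact hb t ht x
    · rw [Real.coe_toNNReal _ hC]
      exact hu t ht x
    · simp [hC, hT₁]
  exact hPL.exists_eq_forall_mem_Icc_hasDerivWithinAt₀

/-- A function with `v' ≤ -v²/2` on `[0,T₁]` and `v(0) < 0` forces `T₁ < -2/v(0)`. -/
theorem riccati_bound {T₁ : ℝ} (hT₁ : 0 ≤ T₁) {v v' : ℝ → ℝ} (hc : ContinuousOn v (Icc 0 T₁))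
    (hd : ∀ t ∈ Ioo 0 T₁, HasDerivAt v (v' t) t) (hv : ∀ t ∈ Ioo 0 T₁, v' t ≤ -(v t ^ 2 / 2))
    (h0 : v 0 < 0) : T₁ < -2 / v 0 := by
  have hanti : AntitoneOn v (Icc 0 T₁) := by
    refine antitoneOn_of_deriv_nonpos (convex_Icc _ _) hc ?_ ?_ <;> rw [interior_Icc]
    · exact fun t ht => (hd t ht).differentiableAt.differentiableWithinAt
    · intro t ht
      rw [(hd t ht).deriv]
      nlinarith [hv t ht, sq_nonneg (v t)]
  have hneg : ∀ t ∈ Icc 0 T₁, v t < 0 := fun t ht =>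
    (hanti ⟨le_rfl, hT₁⟩ ht ht.1).trans_lt h0
  have hw : ∀ t ∈ Ioo 0 T₁, HasDerivAt (fun t => (v t)⁻¹ - t / 2) (-v' t / v t ^ 2 - 1 / 2) t :=
    fun t ht => ((hd t ht).inv (hneg t (Ioo_subset_Icc_self ht)).ne).sub
      ((hasDerivAt_id t).div_const 2)
  have hmono : MonotoneOn (fun t => (v t)⁻¹ - t / 2) (Icc 0 T₁) := by
    refine monotoneOn_of_deriv_nonneg (convex_Icc _ _)
      ((hc.inv₀ fun t ht => (hneg t ht).ne).sub (by fun_prop)) ?_ ?_ <;> rw [interior_Icc]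
    · exact fun t ht => (hw t ht).differentiableAt.differentiableWithinAt
    · intro t ht
      have hn := hneg t (Ioo_subset_Icc_self ht)
      rw [(hw t ht).deriv, sub_nonneg, le_div_iff₀ (sq_pos_of_neg hn)]
      linarith [hv t ht]
  have h1 := hmono ⟨le_rfl, hT₁⟩ ⟨hT₁, le_rfl⟩ hT₁
  have h2 : (v T₁)⁻¹ < 0 := inv_lt_zero.2 (hneg T₁ ⟨hT₁, le_rfl⟩)
  have h3 : -2 / v 0 = -2 * (v 0)⁻¹ := div_eq_mul_inv _ _
  simp only at h1
  rw [h3]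
  linarith

namespace IsClassicalSolRB

variable {ℓ T : ℝ} {u ut ux uxx Px : ℝ → ℝ → ℝ}

/-- The derivative of `u` within `[0,T) × ℝ` gives `u_x` also at the boundary time `t = 0`. -/
theorem ux_eq (hsol : IsClassicalSolRB ℓ T u ut ux uxx Px) {t : ℝ} (ht : t ∈ Ico 0 T) (x : ℝ) :
    ux t x = fderivWithin ℝ (fun p : ℝ × ℝ => u p.1 p.2) (Ico 0 T ×ˢ univ) (t, x) (0, 1) := by
  have hd : HasFDerivWithinAt (fun p : ℝ × ℝ => u p.1 p.2)
      (fderivWithin ℝ (fun p : ℝ × ℝ => u p.1 p.2) (Ico 0 T ×ˢ univ) (t, x))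
      (Ico 0 T ×ˢ univ) (t, x) :=
    (hsol.smooth.differentiableOn (by norm_num) (t, x) ⟨ht, mem_univ x⟩).hasFDerivWithinAt
  have hc : HasDerivAt (fun y : ℝ => (t, y)) ((0 : ℝ), (1 : ℝ)) x :=
    (hasDerivAt_const x t).prodMk (hasDerivAt_id x)
  exact (hsol.hux t ht x).unique
    (hd.comp_hasDerivAt x hc (Eventually.of_forall fun y => ⟨ht, mem_univ y⟩))

theorem continuousOn_ux (hsol : IsClassicalSolRB ℓ T u ut ux uxx Px) :
    ContinuousOn (fun p : ℝ × ℝ => ux p.1 p.2) (Ico 0 T ×ˢ univ) := by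
  have h := hsol.smooth.continuousOn_fderivWithin
    ((uniqueDiffOn_Ico 0 T).prod uniqueDiffOn_univ) (by norm_num)
  exact (h.clm_apply (continuousOn_const (c := ((0 : ℝ), (1 : ℝ))))).congr
    fun p hp => hsol.ux_eq hp.1 p.2

/-- `u_tx = -u u_xx - ½ u_x² - P`, the `x`-derivative of the equation. -/
theorem hasDerivAt_ut (hsol : IsClassicalSolRB ℓ T u ut ux uxx Px) (hℓ : 0 < ℓ)
    {t : ℝ} (ht : t ∈ Ico 0 T) (x : ℝ) :
    HasDerivAt (ut t) (-(u t x * uxx t x) - ux t x ^ 2 / 2 - rbP ℓ ux t x) x := by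
  have hcont : Continuous (ux t) := continuous_iff_continuousAt.2 fun y =>
    (hsol.huxx t ht y).continuousAt
  obtain ⟨Q, hQ⟩ := exists_second_deriv_expConv hℓ (f := fun y => ux t y ^ 2 / 2)
    (by fun_prop) ((hsol.sqInt t ht).div_const 2)
  have hPQ : Px t = Q := funext fun y => (hsol.hPx t ht y).unique (hQ y).1
  have hut : ut t = fun y => -(u t y * ux t y) - ℓ ^ 2 * Q y := funext fun y => by
    have := hsol.eqn t ht y
    rw [hPQ] at this
    linarith
  rw [hut]
  refine ((((hsol.hux t ht x).mul (hsol.huxx t ht x)).neg).sub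
    ((hQ x).2.const_mul (ℓ ^ 2))).congr_deriv ?_
  rw [mul_div_cancel₀ _ (pow_ne_zero 2 hℓ.ne')]
  simp only [rbP]
  ring

/-- Along a characteristic, the slope `v = u_x(t, η)` satisfies `v' = -½ v² - P`. -/
theorem hasDerivAt_ux_characteristic (hsol : IsClassicalSolRB ℓ T u ut ux uxx Px) (hℓ : 0 < ℓ)
    {η : ℝ → ℝ} {t : ℝ} (ht : t ∈ Ioo 0 T) (hη : HasDerivAt η (u t (η t)) t) :
    HasDerivAt (fun s => ux s (η s)) (-(ux t (η t) ^ 2 / 2) - rbP ℓ ux t (η t)) t := by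
  set U : ℝ × ℝ → ℝ := fun p => u p.1 p.2 with hU
  have hS : ∀ p : ℝ × ℝ, p.1 ∈ Ioo 0 T → Ico 0 T ×ˢ univ ∈ nhds p := fun p hp =>
    prod_mem_nhds (Ico_mem_nhds hp.1 hp.2) univ_mem
  have hC2 : ∀ p : ℝ × ℝ, p.1 ∈ Ioo 0 T → ContDiffAt ℝ 2 U p := fun p hp =>
    hsol.smooth.contDiffAt (hS p hp)
  have hdU : ∀ p : ℝ × ℝ, p.1 ∈ Ioo 0 T → HasFDerivAt U (fderiv ℝ U p) p := fun p hp =>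
    ((hC2 p hp).differentiableAt (by norm_num)).hasFDerivAt
  have eux : ∀ s ∈ Ioo 0 T, ∀ y, ux s y = fderiv ℝ U (s, y) (0, 1) := fun s hs y => by
    rw [hsol.ux_eq (Ioo_subset_Ico_self hs), fderivWithin_of_mem_nhds (hS (s, y) hs)]
  have eut : ∀ s ∈ Ioo 0 T, ∀ y, ut s y = fderiv ℝ U (s, y) (1, 0) := fun s hs y => by
    have hc : HasDerivAt (fun r : ℝ => (r, y)) ((1 : ℝ), (0 : ℝ)) s :=
      (hasDerivAt_id s).prodMk (hasDerivAt_const s y)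
    have h : HasDerivAt (fun r => u r y) (fderiv ℝ U (s, y) (1, 0)) s :=
      HasFDerivAt.comp_hasDerivAt (l := U) (f := fun r => (r, y)) s (hdU (s, y) hs) hc
    exact (hsol.hut s (Ioo_subset_Ico_self hs) y).unique h
  obtain ⟨x, hx⟩ : ∃ x, x = η t := ⟨_, rfl⟩
  rw [← hx] at hη ⊢
  have ht' := Ioo_subset_Ico_self ht
  have hD : HasFDerivAt (fderiv ℝ U) (fderiv ℝ (fderiv ℝ U) (t, x)) (t, x) :=
    (((hC2 (t, x) ht).fderiv_right (m := 1) (by norm_num)).differentiableAt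
      (by norm_num)).hasFDerivAt
  generalize hDdef : fderiv ℝ (fderiv ℝ U) (t, x) = D at hD
  have hsymm : ∀ v w, D v w = D w v := fun v w => by
    rw [← hDdef]
    exact (hC2 (t, x) ht).isSymmSndFDerivAt (by simp) v w
  -- Chain rule for a first-order partial derivative of `u` along a curve through `(t, x)`.
  have hcurve : ∀ {γ : ℝ → ℝ × ℝ} {s : ℝ} {w : ℝ × ℝ} (v : ℝ × ℝ), HasDerivAt γ w s →
      γ s = (t, x) → HasDerivAt (fun r => fderiv ℝ U (γ r) v) (D w v) s := by
    intro γ s w v hγ hs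
    rw [← hs] at hD
    exact (ContinuousLinearMap.apply ℝ ℝ v).hasFDerivAt.comp_hasDerivAt s
      (hD.comp_hasDerivAt s hγ)
  have hcx : HasDerivAt (fun y : ℝ => (t, y)) ((0 : ℝ), (1 : ℝ)) x :=
    (hasDerivAt_const x t).prodMk (hasDerivAt_id x)
  have hcη : HasDerivAt (fun s : ℝ => (s, η s)) ((1 : ℝ), u t x) t :=
    (hasDerivAt_id t).prodMk hη
  have huxx : uxx t x = D (0, 1) (0, 1) :=
    (hsol.huxx t ht' x).unique ((hcurve (0, 1) hcx rfl).congr_of_eventuallyEq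
      (Eventually.of_forall fun y => eux t ht y))
  have hutx : -(u t x * uxx t x) - ux t x ^ 2 / 2 - rbP ℓ ux t x = D (0, 1) (1, 0) :=
    (hsol.hasDerivAt_ut hℓ ht' x).unique ((hcurve (1, 0) hcx rfl).congr_of_eventuallyEq
      (Eventually.of_forall fun y => eut t ht y))
  refine ((hcurve (0, 1) hcη (by rw [hx])).congr_of_eventuallyEq ?_).congr_deriv ?_
  · filter_upwards [Ioo_mem_nhds ht.1 ht.2] with s hs using eux s hs _
  · have e : ((1 : ℝ), u t x) = (1, 0) + u t x • ((0 : ℝ), (1 : ℝ)) := by simp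
    rw [e, map_add, map_smul, add_apply, smul_apply,
      hsymm (1, 0) (0, 1), ← huxx, ← hutx, smul_eq_mul]
    ring

/-- No time of existence exceeds `-2/u_0'(x₀)`. -/
theorem lt_of_mem_Ico (hsol : IsClassicalSolRB ℓ T u ut ux uxx Px) (hℓ : 0 < ℓ)
    {T₁ : ℝ} (hT₁ : T₁ ∈ Ico 0 T) {x₀ : ℝ} (hx₀ : ux 0 x₀ < 0) : T₁ < -2 / ux 0 x₀ := by
  have hsub : ∀ t ∈ Icc 0 T₁, t ∈ Ico 0 T := fun t ht => ⟨ht.1, ht.2.trans_lt hT₁.2⟩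
  obtain ⟨C, hC⟩ := hsol.bounded T₁ hT₁
  obtain ⟨η, hη0, hη⟩ := exists_characteristic hT₁.1
    (fun x t ht => (hsol.hut t (hsub t ht) x).continuousAt.continuousWithinAt)
    (fun t ht => hsol.hux t (hsub t ht)) (fun t ht x => (hC t ht x).1)
    (fun t ht x => (hC t ht x).2.1) x₀
  have hηc : ContinuousOn η (Icc 0 T₁) := fun t ht => (hη t ht).continuousWithinAt
  have hbound := riccati_bound hT₁.1 (v := fun t => ux t (η t))
    (v' := fun t => -(ux t (η t) ^ 2 / 2) - rbP ℓ ux t (η t))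
    (hsol.continuousOn_ux.comp (continuousOn_id.prodMk hηc)
      fun t ht => ⟨hsub t ht, mem_univ _⟩)
    (fun t ht => hsol.hasDerivAt_ux_characteristic hℓ ⟨ht.1, ht.2.trans hT₁.2⟩
      ((hη t (Ioo_subset_Icc_self ht)).hasDerivAt (Icc_mem_nhds ht.1 ht.2)))
    (fun t _ => sub_le_self _ (integral_nonneg fun y => by positivity))
    (by simpa only [hη0] using hx₀)
  simpa only [hη0] using hbound

end IsClassicalSolRB

/-- **Upper bound on the blow-up time** (Proposition 3.3): if `u_0'(x₀) < 0` for some `x₀`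
then `T ≤ −2/u_0'(x₀)`; in particular if the (finite) infimum `m` of `u_0'` is negative
then `T ≤ −2/m`. -/
theorem blowup_time_upper_bound (ℓ T : ℝ) (hℓ : 0 < ℓ) (hT : 0 < T)
    (u ut ux uxx Px : ℝ → ℝ → ℝ)
    (hsol : IsClassicalSolRB ℓ T u ut ux uxx Px) :
    (∀ x₀ : ℝ, ux 0 x₀ < 0 → T ≤ -2 / ux 0 x₀) ∧
    (∀ m : ℝ, IsGLB (Set.range fun x => ux 0 x) m → m < 0 → T ≤ -2 / m) := by
  have main : ∀ x₀ : ℝ, ux 0 x₀ < 0 → T ≤ -2 / ux 0 x₀ := fun x₀ hx₀ =>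
    le_of_forall_lt fun t ht => by
      have h := hsol.lt_of_mem_Ico hℓ ⟨le_max_right t 0, max_lt ht hT⟩ hx₀
      exact (le_max_left t 0).trans_lt h
  refine ⟨main, fun m hm hm0 => ?_⟩
  have hlb : -2 / T ≤ m := by
    refine hm.2 ?_
    rintro _ ⟨x, rfl⟩
    rcases lt_or_ge (ux 0 x) 0 with hx | hx
    · have h := (le_div_iff_of_neg hx).1 (main x hx)
      rw [div_le_iff₀ hT]
      linarith
    · exact (div_neg_of_neg_of_pos (by norm_num) hT).le.trans hx
  rw [le_div_iff_of_neg hm0]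
  rw [div_le_iff₀ hT] at hlb
  linarith
end

section
/- Let ℓ > 0 and let u be a classical solution of the rB equation on [0,T) that blows up at time T, in the sense that inf_{x∈ℝ} u_x(t,x) → −∞ as t ↑ T. Assume m₀ := inf_x u_0'(x) and M₀ := sup_x u_0'(x) satisfy m₀ < 0 < M₀, both are finite, and |m₀| ≥ M₀. Then −1/m₀ ≤ T ≤ −2/m₀. -/
/-!
The slope `H(t) = u_x(t, X(t))` along a characteristic `X' = u(t, X)` satisfies the Riccati equation
`H' = -H²/2 - P` (`rb_riccati`): differentiate the equation in `x` and use `ℓ² P'' = P - u_x²/2`,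
i.e. that the exponential kernel is the Green function of `1 - ℓ² ∂²` (`rb_green`).
Characteristics reach every point of `[0,T) × ℝ` and live as long as the solution (`rb_char`).

*Upper bound on `T`.* Since `P ≥ 0`, `H' ≤ -H²/2`, so a negative initial slope `h` cannot survive
beyond time `-2/h` (`rb_lifespan`); take `h` close to `m₀`.

*Lower bound on `T`.* Since `P ≥ 0`, slopes decrease along characteristics and
`u_x ≤ M₀ ≤ a := -m₀` for all times (`rb_upper`). Since the kernel has mass one,
`P ≤ sup u_x² / 2`, so `-H' ≤ sup u_x²`. Comparison with the solution `ψ(t) = a / (1 - a t)` of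
`ψ' = ψ²` gives `u_x ≥ -ψ` (`rb_lower`), which excludes blow-up before `1/a = -1/m₀`. The
comparison is run as an iteration halving a weighted error bound `d e^{4Ct}` (`rb_step`), which
avoids any regularity question about `t ↦ sup_x |u_x(t, x)|`.
-/


open MeasureTheory Set Filter

/-! ### The exponential kernel as a Green function -/

lemma rb_kernel_integral {ℓ : ℝ} (hℓ : 0 < ℓ) (x : ℝ) :
    ∫ y : ℝ, (2 * ℓ)⁻¹ * Real.exp (-|x - y| / ℓ) = 1 := by
  have h1 := integral_sub_left_eq_self
    (fun z : ℝ => (2 * ℓ)⁻¹ * Real.exp (-|z| / ℓ)) volume x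
  rw [h1, integral_const_mul, integral_comp_abs (f := fun z => Real.exp (-z / ℓ))]
  have h2 := integral_exp_mul_Ioi (a := -ℓ⁻¹) (by simpa using hℓ) 0
  have h3 : (fun z : ℝ => Real.exp (-z / ℓ)) = fun z => Real.exp (-ℓ⁻¹ * z) := by
    ext z; congr 1; field_simp
  rw [h3, h2]
  simp
  field_simp

lemma rb_kernel_integrable {ℓ : ℝ} (hℓ : 0 < ℓ) (x : ℝ) :
    Integrable (fun y : ℝ => (2 * ℓ)⁻¹ * Real.exp (-|x - y| / ℓ)) := by
  -- a non-integrable function would have integral `0`, not `1`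
  by_contra h
  have h1 := rb_kernel_integral hℓ x
  rw [integral_undef h] at h1
  exact zero_ne_one h1

lemma rb_hasDerivAt_Iic {g : ℝ → ℝ} (hg : Continuous g)
    (hi : ∀ x, IntegrableOn g (Iic x)) (x : ℝ) :
    HasDerivAt (fun z => ∫ y in Iic z, g y) (g x) x := by
  have h1 : (fun z => ∫ y in Iic z, g y) =
      fun z => (∫ y in (0 : ℝ)..z, g y) + ∫ y in Iic 0, g y := by
    ext z
    rw [← intervalIntegral.integral_Iic_sub_Iic (hi 0) (hi z)]; ring
  rw [h1]
  exact (intervalIntegral.integral_hasDerivAt_right (hg.intervalIntegrable _ _)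
    (hg.stronglyMeasurableAtFilter _ _) hg.continuousAt).add_const _

lemma rb_hasDerivAt_Ioi {g : ℝ → ℝ} (hg : Continuous g)
    (hi : ∀ x, IntegrableOn g (Ioi x)) (x : ℝ) :
    HasDerivAt (fun z => ∫ y in Ioi z, g y) (-g x) x := by
  have h1 : (fun z => ∫ y in Ioi z, g y) =
      fun z => (∫ y in Ioi 0, g y) - (∫ y in (0 : ℝ)..z, g y) := by
    ext z
    rw [← intervalIntegral.integral_interval_add_Ioi (hi 0) (hi z)]; ring
  rw [h1]
  exact (intervalIntegral.integral_hasDerivAt_right (hg.intervalIntegrable _ _)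
    (hg.stronglyMeasurableAtFilter _ _) hg.continuousAt).const_sub _

/-- `P = 𝔊_ℓ ∗ f` solves `ℓ² P'' = P - f`. Splitting the convolution at `y = x` writes `P` as
`(A + B) / (2ℓ)` with one-sided integrals obeying `A' = -A/ℓ + f` and `B' = B/ℓ - f`. -/
lemma rb_green {ℓ : ℝ} (hℓ : 0 < ℓ) {f P P' : ℝ → ℝ} (hf : Continuous f) (hfi : Integrable f)
    (hP : ∀ x, P x = ∫ y : ℝ, (2 * ℓ)⁻¹ * Real.exp (-|x - y| / ℓ) * f y)
    (hP' : ∀ x, HasDerivAt P (P' x) x) (x : ℝ) :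
    HasDerivAt P' ((P x - f x) / ℓ ^ 2) x := by
  have hgi : ∀ z, IntegrableOn (fun y => Real.exp (y / ℓ) * f y) (Iic z) := by
    intro z
    refine Integrable.bdd_mul (c := Real.exp (z / ℓ)) hfi.integrableOn
      (by fun_prop) ?_
    refine (ae_restrict_iff' measurableSet_Iic).2 (Eventually.of_forall fun y hy => ?_)
    rw [Real.norm_eq_abs, Real.abs_exp]
    exact Real.exp_le_exp.2 (by gcongr; exact hy)
  have hhi : ∀ z, IntegrableOn (fun y => Real.exp (-y / ℓ) * f y) (Ioi z) := by
    intro z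
    refine Integrable.bdd_mul (c := Real.exp (-z / ℓ)) hfi.integrableOn
      (by fun_prop) ?_
    refine (ae_restrict_iff' measurableSet_Ioi).2 (Eventually.of_forall fun y hy => ?_)
    rw [Real.norm_eq_abs, Real.abs_exp]
    exact Real.exp_le_exp.2 (by gcongr; exact le_of_lt hy)
  set A : ℝ → ℝ := fun z => Real.exp (-z / ℓ) * ∫ y in Iic z, Real.exp (y / ℓ) * f y with hA
  set B : ℝ → ℝ := fun z => Real.exp (z / ℓ) * ∫ y in Ioi z, Real.exp (-y / ℓ) * f y with hB
  have hA' : ∀ z, HasDerivAt A (-A z / ℓ + f z) z := by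
    intro z
    have h1 := rb_hasDerivAt_Iic (by fun_prop) hgi z
    have h2 : HasDerivAt (fun z : ℝ => Real.exp (-z / ℓ)) (Real.exp (-z / ℓ) * (-1 / ℓ)) z :=
      ((hasDerivAt_id z).neg.div_const ℓ).exp
    refine (h2.mul h1).congr_deriv ?_
    have h3 : Real.exp (-z / ℓ) * Real.exp (z / ℓ) = 1 := by
      rw [← Real.exp_add, neg_div, neg_add_cancel, Real.exp_zero]
    simp only [hA]
    linear_combination f z * h3
  have hB' : ∀ z, HasDerivAt B (B z / ℓ - f z) z := by
    intro z
    have h1 := rb_hasDerivAt_Ioi (by fun_prop) hhi z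
    have h2 : HasDerivAt (fun z : ℝ => Real.exp (z / ℓ)) (Real.exp (z / ℓ) * (1 / ℓ)) z :=
      ((hasDerivAt_id z).div_const ℓ).exp
    refine (h2.mul h1).congr_deriv ?_
    have h3 : Real.exp (z / ℓ) * Real.exp (-z / ℓ) = 1 := by
      rw [← Real.exp_add, neg_div, add_neg_cancel, Real.exp_zero]
    simp only [hB]
    linear_combination -f z * h3
  have hPAB : ∀ z, P z = (2 * ℓ)⁻¹ * (A z + B z) := by
    intro z
    have hki : Integrable (fun y : ℝ => Real.exp (-|z - y| / ℓ) * f y) := by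
      refine Integrable.bdd_mul (c := 1) hfi (by fun_prop) (Eventually.of_forall fun y => ?_)
      rw [Real.norm_eq_abs, Real.abs_exp, Real.exp_le_one_iff]
      exact div_nonpos_of_nonpos_of_nonneg (by simp) hℓ.le
    rw [hP z]
    simp_rw [mul_assoc]
    rw [integral_const_mul]
    congr 1
    rw [← intervalIntegral.integral_Iic_add_Ioi (b := z) hki.integrableOn hki.integrableOn]
    simp only [hA, hB]
    rw [← integral_const_mul, ← integral_const_mul]
    congr 1
    · refine setIntegral_congr_fun measurableSet_Iic fun y hy => ?_
      have hy' : y ≤ z := hy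
      rw [← mul_assoc, ← Real.exp_add, abs_of_nonneg (by linarith)]
      congr 2; ring
    · refine setIntegral_congr_fun measurableSet_Ioi fun y hy => ?_
      have hy' : z < y := hy
      rw [← mul_assoc, ← Real.exp_add, abs_of_neg (by linarith)]
      congr 2; ring
  have hPeq : P = fun z => (2 * ℓ)⁻¹ * (A z + B z) := funext hPAB
  have hP'eq : P' = fun z => (2 * ℓ)⁻¹ * ((-A z / ℓ + f z) + (B z / ℓ - f z)) := by
    ext z
    refine (hP' z).unique ?_
    rw [hPeq]
    exact ((hA' z).add (hB' z)).const_mul _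
  have hP'eq2 : P' = fun z => (2 * ℓ)⁻¹ * ((B z - A z) / ℓ) := by
    rw [hP'eq]; ext z; ring
  rw [hP'eq2]
  refine ((((hB' x).sub (hA' x)).div_const ℓ).const_mul (2 * ℓ)⁻¹).congr_deriv ?_
  rw [hPAB x]
  field_simp
  ring

/-! ### Regularity of `u_x` and the Riccati equation along characteristics -/

/-- Continuity of `u_x` up to `t = 0`: within the set `[0,T) × ℝ` it is a component of the
derivative of `u`. -/
lemma rb_ux_cont {ℓ T : ℝ} {u ut ux uxx Px : ℝ → ℝ → ℝ}
    (hsol : IsClassicalSolRB ℓ T u ut ux uxx Px) :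
    ContinuousOn (fun p : ℝ × ℝ => ux p.1 p.2) (Set.Ico 0 T ×ˢ Set.univ) := by
  have hc := hsol.smooth.continuousOn_fderivWithin
    ((uniqueDiffOn_Ico 0 T).prod uniqueDiffOn_univ) (by norm_num)
  have h2 : ContinuousOn (fun p => fderivWithin ℝ (fun p : ℝ × ℝ => u p.1 p.2)
      (Set.Ico 0 T ×ˢ Set.univ) p ((0, 1) : ℝ × ℝ)) (Set.Ico 0 T ×ˢ Set.univ) :=
    hc.clm_apply continuousOn_const
  refine h2.congr fun p hp => ?_
  have hd := ((hsol.smooth.differentiableOn (by norm_num)) p hp).hasFDerivWithinAt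
  have hl : HasDerivWithinAt (fun y : ℝ => (p.1, y)) ((0, 1) : ℝ × ℝ) Set.univ p.2 :=
    ((hasDerivAt_const p.2 p.1).prodMk (hasDerivAt_id p.2)).hasDerivWithinAt
  have h3 := HasFDerivWithinAt.comp_hasDerivWithinAt p.2 (t := Set.Ico 0 T ×ˢ Set.univ)
    (f := fun y : ℝ => (p.1, y)) hd hl
    (fun y _ => ⟨hp.1, mem_univ _⟩)
  exact (hsol.hux p.1 hp.1 p.2).unique (hasDerivWithinAt_univ.1 h3)

/-- Along a characteristic `X' = u(t, X)`, the slope `H(t) = u_x(t, X(t))` satisfies the Riccati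
equation `H' = -H²/2 - P`. This is the equation differentiated in `x`: the mixed derivatives of
`u` commute, and `ℓ² P_xx = P - u_x²/2`. -/
lemma rb_riccati {ℓ T : ℝ} (hℓ : 0 < ℓ) {u ut ux uxx Px : ℝ → ℝ → ℝ}
    (hsol : IsClassicalSolRB ℓ T u ut ux uxx Px) {X : ℝ → ℝ} {t : ℝ} (ht : t ∈ Set.Ioo 0 T)
    (hX : HasDerivAt X (u t (X t)) t) :
    HasDerivAt (fun s => ux s (X s)) (-(ux t (X t) ^ 2) / 2 - rbP ℓ ux t (X t)) t := by
  obtain ⟨x, hx⟩ : ∃ x, X t = x := ⟨_, rfl⟩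
  rw [hx] at hX ⊢
  have htI : t ∈ Set.Ico 0 T := ⟨ht.1.le, ht.2⟩
  have hnhds : ∀ p : ℝ × ℝ, p.1 ∈ Set.Ioo 0 T →
      Set.Ico 0 T ×ˢ (Set.univ : Set ℝ) ∈ nhds p := fun p hp =>
    prod_mem_nhds (Ico_mem_nhds hp.1 hp.2) univ_mem
  set F : ℝ × ℝ → ℝ := fun p => u p.1 p.2 with hF
  have hFd : ∀ p : ℝ × ℝ, p.1 ∈ Set.Ioo 0 T → HasFDerivAt F (fderiv ℝ F p) p := fun p hp =>
    ((hsol.smooth.contDiffAt (hnhds p hp)).differentiableAt (by norm_num)).hasFDerivAt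
  have hFx : ∀ p : ℝ × ℝ, p.1 ∈ Set.Ioo 0 T → ux p.1 p.2 = fderiv ℝ F p (0, 1) := by
    intro p hp
    have hl : HasDerivAt (fun y : ℝ => (p.1, y)) ((0, 1) : ℝ × ℝ) p.2 :=
      (hasDerivAt_const p.2 p.1).prodMk (hasDerivAt_id p.2)
    exact (hsol.hux p.1 ⟨hp.1.le, hp.2⟩ p.2).unique
      (HasFDerivAt.comp_hasDerivAt (f := fun y : ℝ => (p.1, y)) p.2 (hFd p hp) hl)
  have hFt : ∀ p : ℝ × ℝ, p.1 ∈ Set.Ioo 0 T → ut p.1 p.2 = fderiv ℝ F p (1, 0) := by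
    intro p hp
    have hl : HasDerivAt (fun s : ℝ => (s, p.2)) ((1, 0) : ℝ × ℝ) p.1 :=
      (hasDerivAt_id p.1).prodMk (hasDerivAt_const p.1 p.2)
    exact (hsol.hut p.1 ⟨hp.1.le, hp.2⟩ p.2).unique
      (HasFDerivAt.comp_hasDerivAt (f := fun s : ℝ => (s, p.2)) p.1 (hFd p hp) hl)
  have hC2 : ContDiffAt ℝ 2 F (t, x) := hsol.smooth.contDiffAt (hnhds (t, x) ht)
  have hsymm : IsSymmSndFDerivAt ℝ F (t, x) := hC2.isSymmSndFDerivAt (by simp)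
  have hD : HasFDerivAt (fderiv ℝ F) (fderiv ℝ (fderiv ℝ F) (t, x)) (t, x) :=
    ((hC2.fderiv_right (m := 1) (by norm_num)).differentiableAt (by norm_num)).hasFDerivAt
  set D := fderiv ℝ (fderiv ℝ F) (t, x) with hDdef
  have hcurve : ∀ (c : ℝ → ℝ × ℝ) (v w : ℝ × ℝ) (r : ℝ), c r = (t, x) → HasDerivAt c v r →
      HasDerivAt (fun s => fderiv ℝ F (c s) w) (D v w) r := by
    intro c v w r hcr hc
    have hD' : HasFDerivAt (fderiv ℝ F) D (c r) := by rw [hcr]; exact hD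
    have h1 := hD'.comp_hasDerivAt r hc
    have h2 := h1.clm_apply (hasDerivAt_const r w)
    simpa using h2
  have hlx : HasDerivAt (fun y : ℝ => (t, y)) ((0, 1) : ℝ × ℝ) x :=
    (hasDerivAt_const x t).prodMk (hasDerivAt_id x)
  have huxx : uxx t x = D (0, 1) (0, 1) := by
    refine (hsol.huxx t htI x).unique ?_
    have h1 := hcurve (fun y => (t, y)) (0, 1) (0, 1) x rfl hlx
    refine h1.congr_of_eventuallyEq (Eventually.of_forall fun y => ?_)
    exact hFx (t, y) ht
  have hutx : HasDerivAt (fun y => ut t y) (D (0, 1) (1, 0)) x := by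
    have h1 := hcurve (fun y => (t, y)) (0, 1) (1, 0) x rfl hlx
    refine h1.congr_of_eventuallyEq (Eventually.of_forall fun y => ?_)
    exact hFt (t, y) ht
  have hgreen := rb_green hℓ (f := fun y => ux t y ^ 2 / 2) (P := rbP ℓ ux t) (P' := Px t)
    (by
      have : Continuous (fun y => ux t y) :=
        continuous_iff_continuousAt.2 fun y => (hsol.huxx t htI y).continuousAt
      fun_prop)
    ((hsol.sqInt t htI).div_const 2) (fun _ => rfl) (hsol.hPx t htI) x
  -- the mixed derivative, computed a second time from the equation
  have hutx' : HasDerivAt (fun y => ut t y)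
      (-(ux t x * ux t x + u t x * uxx t x)
        - ℓ ^ 2 * ((rbP ℓ ux t x - ux t x ^ 2 / 2) / ℓ ^ 2)) x := by
    have h1 := (((hsol.hux t htI x).mul (hsol.huxx t htI x)).neg).sub (hgreen.const_mul (ℓ ^ 2))
    refine h1.congr_of_eventuallyEq (Eventually.of_forall fun y => ?_)
    have := hsol.eqn t htI y
    simp only [Pi.neg_apply, Pi.mul_apply, Pi.sub_apply]
    linarith
  have hval := hutx.unique hutx'
  have hmain := hcurve (fun s => (s, X s)) (1, u t x) (0, 1) t (by simp [hx])
    ((hasDerivAt_id t).prodMk hX)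
  have heq : (fun s => ux s (X s)) =ᶠ[nhds t] fun s => fderiv ℝ F (s, X s) (0, 1) := by
    filter_upwards [Ioo_mem_nhds ht.1 ht.2] with s hs
    exact hFx (s, X s) hs
  refine (hmain.congr_of_eventuallyEq heq).congr_deriv ?_
  have hsplit : ((1, u t x) : ℝ × ℝ) = (1, 0) + u t x • (0, 1) := by simp
  rw [hsplit, map_add, map_smul]
  simp only [add_apply, smul_apply, smul_eq_mul]
  rw [hsymm.eq (1, 0) (0, 1), ← hDdef, hval, ← huxx]
  field_simp
  ring

/-- A characteristic exists on all of `[0, t₁]` through any point `(t₀, x₀)` with `t₀ ∈ [0, t₁]`: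
`u` is bounded and uniformly Lipschitz in `x` there, so Picard–Lindelöf applies on a ball of
radius `C t₁`. -/
lemma rb_char {ℓ T : ℝ} {u ut ux uxx Px : ℝ → ℝ → ℝ}
    (hsol : IsClassicalSolRB ℓ T u ut ux uxx Px) {t₁ : ℝ} (ht₁ : t₁ ∈ Set.Ico 0 T)
    {t₀ : ℝ} (ht₀ : t₀ ∈ Set.Icc 0 t₁) (x₀ : ℝ) :
    ∃ X : ℝ → ℝ, X t₀ = x₀ ∧ ContinuousOn X (Set.Icc 0 t₁) ∧
      ∀ t ∈ Set.Ioo 0 t₁, HasDerivAt X (u t (X t)) t := by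
  obtain ⟨C, hC⟩ := hsol.bounded t₁ ht₁
  have hC0 : 0 ≤ C := (abs_nonneg _).trans (hC 0 ⟨le_rfl, ht₁.1⟩ 0).1
  have hsub : ∀ t ∈ Set.Icc 0 t₁, t ∈ Set.Ico 0 T := fun t ht => ⟨ht.1, ht.2.trans_lt ht₁.2⟩
  have hPL : IsPicardLindelof u (tmin := 0) (tmax := t₁) ⟨t₀, ht₀⟩ x₀
      (Real.toNNReal (C * t₁)) 0 (Real.toNNReal C) (Real.toNNReal C) := by
    refine ⟨?_, ?_, ?_, ?_⟩
    · intro t ht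
      refine (convex_closedBall _ _).lipschitzOnWith_of_nnnorm_hasDerivWithin_le
        (f' := ux t) (fun x _ => (hsol.hux t (hsub t ht) x).hasDerivWithinAt) fun x _ => ?_
      rw [← NNReal.coe_le_coe, Real.coe_toNNReal _ hC0]
      exact (hC t ht x).2.1
    · intro x _ t ht
      exact (hsol.hut t (hsub t ht) x).continuousAt.continuousWithinAt
    · intro t ht x _
      rw [Real.coe_toNNReal _ hC0]
      exact (hC t ht x).1
    · rw [Real.coe_toNNReal _ hC0, Real.coe_toNNReal _ (mul_nonneg hC0 ht₁.1)]
      simp only [NNReal.coe_zero, sub_zero]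
      refine mul_le_mul_of_nonneg_left (max_le ?_ ?_) hC0
      · linarith [ht₀.1]
      · exact ht₀.2
  obtain ⟨X, hX0, hX⟩ := hPL.exists_eq_forall_mem_Icc_hasDerivWithinAt₀
  refine ⟨X, hX0, fun t ht => (hX t ht).continuousWithinAt, fun t ht => ?_⟩
  exact (hX t ⟨ht.1.le, ht.2.le⟩).hasDerivAt (Icc_mem_nhds ht.1 ht.2)

/-- The slope along a characteristic through `(t₀, x₀)`: continuous on `[0, t₁]`, Riccati inside. -/
lemma rb_slope {ℓ T : ℝ} (hℓ : 0 < ℓ) {u ut ux uxx Px : ℝ → ℝ → ℝ}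
    (hsol : IsClassicalSolRB ℓ T u ut ux uxx Px) {t₁ : ℝ} (ht₁ : t₁ ∈ Set.Ico 0 T)
    {t₀ : ℝ} (ht₀ : t₀ ∈ Set.Icc 0 t₁) (x₀ : ℝ) :
    ∃ X : ℝ → ℝ, X t₀ = x₀ ∧ ContinuousOn (fun s => ux s (X s)) (Set.Icc 0 t₁) ∧
      ∀ t ∈ Set.Ioo 0 t₁, HasDerivAt (fun s => ux s (X s))
        (-(ux t (X t) ^ 2) / 2 - rbP ℓ ux t (X t)) t := by
  obtain ⟨X, hX0, hXc, hX⟩ := rb_char hsol ht₁ ht₀ x₀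
  refine ⟨X, hX0, ?_, fun t ht => rb_riccati hℓ hsol ⟨ht.1, ht.2.trans ht₁.2⟩ (hX t ht)⟩
  exact (rb_ux_cont hsol).comp (f := fun s => (s, X s)) (continuousOn_id.prodMk hXc)
    fun s hs => ⟨⟨hs.1, hs.2.trans_lt ht₁.2⟩, mem_univ _⟩

/-! ### A priori bounds on the slope -/

lemma rbP_nonneg {ℓ : ℝ} (hℓ : 0 < ℓ) (ux : ℝ → ℝ → ℝ) (t x : ℝ) : 0 ≤ rbP ℓ ux t x :=
  integral_nonneg fun y => by positivity

lemma rbP_le {ℓ : ℝ} (hℓ : 0 < ℓ) {ux : ℝ → ℝ → ℝ} {t N : ℝ} (h : ∀ y, |ux t y| ≤ N) (x : ℝ) :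
    rbP ℓ ux t x ≤ N ^ 2 / 2 := by
  have h1 : rbP ℓ ux t x ≤
      ∫ y : ℝ, (2 * ℓ)⁻¹ * Real.exp (-|x - y| / ℓ) * (N ^ 2 / 2) := by
    refine integral_mono_of_nonneg (Eventually.of_forall fun y => by positivity)
      ((rb_kernel_integrable hℓ x).mul_const _) (Eventually.of_forall fun y => ?_)
    have : ux t y ^ 2 ≤ N ^ 2 := sq_le_sq' (by linarith [(abs_le.1 (h y)).1]) (abs_le.1 (h y)).2
    dsimp only
    gcongr
  rwa [integral_mul_const, rb_kernel_integral hℓ x, one_mul] at h1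

/-- The slope decreases along characteristics, so upper bounds of `u_0'` persist. -/
lemma rb_upper {ℓ T : ℝ} (hℓ : 0 < ℓ) {u ut ux uxx Px : ℝ → ℝ → ℝ}
    (hsol : IsClassicalSolRB ℓ T u ut ux uxx Px) {M : ℝ} (hM : ∀ x, ux 0 x ≤ M)
    {t : ℝ} (ht : t ∈ Set.Ico 0 T) (x : ℝ) : ux t x ≤ M := by
  obtain ⟨X, hX0, hXc, hX⟩ := rb_slope hℓ hsol ht (right_mem_Icc.2 ht.1) x
  have hanti := antitoneOn_of_hasDerivWithinAt_nonpos (convex_Icc 0 t) hXc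
    (fun s hs => (hX s (by rwa [interior_Icc] at hs)).hasDerivWithinAt)
    (fun s _ => by
      have := rbP_nonneg hℓ ux s (X s)
      nlinarith [sq_nonneg (ux s (X s))])
  have h1 := hanti (left_mem_Icc.2 ht.1) (right_mem_Icc.2 ht.1) ht.1
  simp only [hX0] at h1
  exact h1.trans (hM _)

/-- One step of a Gronwall-type iteration comparing `-u_x` with `ψ(t) = a / (1 - a t)`, the
solution of `ψ' = ψ²`, `ψ(0) = a`: an error bound `d e^{4Ct}` improves to `(d/2) e^{4Ct}`. -/
lemma rb_step {ℓ T : ℝ} (hℓ : 0 < ℓ) {u ut ux uxx Px : ℝ → ℝ → ℝ}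
    (hsol : IsClassicalSolRB ℓ T u ut ux uxx Px) {a t₁ C d : ℝ} (ha : 0 < a)
    (ht₁ : t₁ ∈ Set.Ico 0 T) (hat : a * t₁ < 1)
    (hC : ∀ s ∈ Set.Icc 0 t₁, ∀ x, |ux s x| ≤ C) (hψC : a / (1 - a * t₁) ≤ C)
    (hU : ∀ x, ux 0 x ≤ a) (hL : ∀ x, -a ≤ ux 0 x) (hd : 0 ≤ d)
    (hind : ∀ s ∈ Set.Icc 0 t₁, ∀ x,
      -ux s x ≤ a / (1 - a * s) + d * Real.exp (4 * C * s)) :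
    ∀ s ∈ Set.Icc 0 t₁, ∀ x,
      -ux s x ≤ a / (1 - a * s) + d / 2 * Real.exp (4 * C * s) := by
  intro t ht x
  have hsub : ∀ s ∈ Set.Icc 0 t, s ∈ Set.Icc 0 t₁ := fun s hs => ⟨hs.1, hs.2.trans ht.2⟩
  have hden : ∀ s ∈ Set.Icc 0 t₁, 0 < 1 - a * s := fun s hs => by
    have := mul_le_mul_of_nonneg_left hs.2 ha.le
    linarith
  have htT : t ∈ Set.Ico 0 T := ⟨ht.1, ht.2.trans_lt ht₁.2⟩
  obtain ⟨X, hX0, hXc, hX⟩ := rb_slope hℓ hsol htT (right_mem_Icc.2 ht.1) x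
  have hψd : ∀ s ∈ Set.Icc 0 t,
      HasDerivAt (fun s => a / (1 - a * s)) ((a / (1 - a * s)) ^ 2) s := by
    intro s hs
    have hp := hden s (hsub s hs)
    have h1 : HasDerivAt (fun s : ℝ => 1 - a * s) (-(a * 1)) s :=
      ((hasDerivAt_id s).const_mul a).const_sub 1
    refine ((hasDerivAt_const s a).div h1 hp.ne').congr_deriv ?_
    field_simp
    ring
  have hEd : ∀ s : ℝ, HasDerivAt (fun s => d / 2 * Real.exp (4 * C * s))
      (d / 2 * (Real.exp (4 * C * s) * (4 * C * 1))) s := fun s =>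
    (((hasDerivAt_id s).const_mul (4 * C)).exp).const_mul (d / 2)
  have hanti : AntitoneOn
      (fun s => (-ux s (X s) - a / (1 - a * s)) - d / 2 * Real.exp (4 * C * s))
      (Set.Icc 0 t) := by
    refine antitoneOn_of_hasDerivWithinAt_nonpos (convex_Icc 0 t)
      (f' := fun s => (-(-(ux s (X s) ^ 2) / 2 - rbP ℓ ux s (X s)) - (a / (1 - a * s)) ^ 2)
        - d / 2 * (Real.exp (4 * C * s) * (4 * C * 1)))
      ?_ ?_ ?_
    · exact (hXc.neg.sub fun s hs => (hψd s hs).continuousAt.continuousWithinAt).sub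
        fun s _ => (hEd s).continuousAt.continuousWithinAt
    · intro s hs
      rw [interior_Icc] at hs
      exact (((hX s hs).neg.sub (hψd s ⟨hs.1.le, hs.2.le⟩)).sub (hEd s)).hasDerivWithinAt
    · intro s hs
      rw [interior_Icc] at hs
      have hs1 : s ∈ Set.Icc 0 t₁ := hsub s ⟨hs.1.le, hs.2.le⟩
      set ψ := a / (1 - a * s) with hψ
      set E := d * Real.exp (4 * C * s) with hE
      have hE0 : 0 ≤ E := by positivity
      have hp := hden s hs1
      have haψ : a ≤ ψ := by
        rw [hψ, le_div_iff₀ hp]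
        nlinarith [mul_nonneg ha.le (mul_nonneg ha.le hs1.1)]
      have hψle : ψ ≤ C := by
        refine le_trans ?_ hψC
        have := hden t₁ ⟨ht₁.1, le_rfl⟩
        rw [hψ]
        gcongr
        exact hs1.2
      -- `N` bounds `|u_x(s,·)|`; truncating at `C` keeps `N² - ψ²` linear in the error `E`
      set N := min C (ψ + E) with hN
      have hNC : N ≤ C := min_le_left _ _
      have hNE : N ≤ ψ + E := min_le_right _ _
      have hψN : ψ ≤ N := le_min hψle (by linarith)
      have hux : ∀ y, |ux s y| ≤ N := by
        intro y
        refine le_min (hC s hs1 y) (abs_le.2 ⟨?_, ?_⟩)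
        · linarith [hind s hs1 y]
        · have := rb_upper hℓ hsol hU ⟨hs1.1, hs1.2.trans_lt ht₁.2⟩ y
          linarith
      have hP := rbP_le hℓ hux (X s)
      have hsq : ux s (X s) ^ 2 ≤ N ^ 2 :=
        sq_le_sq' (by linarith [(abs_le.1 (hux (X s))).1]) (abs_le.1 (hux (X s))).2
      have hdiff : N ^ 2 - ψ ^ 2 ≤ E * (2 * C) := by
        have : (N - ψ) * (N + ψ) ≤ E * (2 * C) :=
          mul_le_mul (by linarith) (by linarith) (by linarith) hE0
        linarith
      have hfin : d / 2 * (Real.exp (4 * C * s) * (4 * C * 1)) = E * (2 * C) := by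
        rw [hE]; ring
      rw [hfin]
      linarith
  have h1 := hanti (left_mem_Icc.2 ht.1) (right_mem_Icc.2 ht.1) ht.1
  simp only [hX0, mul_zero, sub_zero, div_one, Real.exp_zero, mul_one] at h1
  linarith [hL (X 0)]

/-- Iterating `rb_step`: `u_x(t,·) ≥ -a / (1 - a t)` as long as `a t < 1`. -/
lemma rb_lower {ℓ T : ℝ} (hℓ : 0 < ℓ) {u ut ux uxx Px : ℝ → ℝ → ℝ}
    (hsol : IsClassicalSolRB ℓ T u ut ux uxx Px) {a t : ℝ} (ha : 0 < a)
    (ht : t ∈ Set.Ico 0 T) (hat : a * t < 1)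
    (hU : ∀ x, ux 0 x ≤ a) (hL : ∀ x, -a ≤ ux 0 x) (x : ℝ) :
    -(a / (1 - a * t)) ≤ ux t x := by
  obtain ⟨C₀, hC₀⟩ := hsol.bounded t ht
  set C := max C₀ (a / (1 - a * t)) with hCdef
  have hψC : a / (1 - a * t) ≤ C := le_max_right _ _
  have hC : ∀ s ∈ Set.Icc 0 t, ∀ x, |ux s x| ≤ C := fun s hs x =>
    (hC₀ s hs x).2.1.trans (le_max_left _ _)
  have hC0 : 0 ≤ C := (abs_nonneg _).trans (hC 0 ⟨le_rfl, ht.1⟩ 0)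
  have hiter : ∀ n : ℕ, ∀ s ∈ Set.Icc 0 t, ∀ x,
      -ux s x ≤ a / (1 - a * s) + C * (1 / 2) ^ n * Real.exp (4 * C * s) := by
    intro n
    induction n with
    | zero =>
      intro s hs x
      have h1 : 0 < 1 - a * s := by
        have := mul_le_mul_of_nonneg_left hs.2 ha.le
        linarith
      have h2 : 0 ≤ a / (1 - a * s) := by positivity
      have h3 : (1 : ℝ) ≤ Real.exp (4 * C * s) :=
        Real.one_le_exp (mul_nonneg (by positivity) hs.1)
      have h4 := (abs_le.1 (hC s hs x)).1
      rw [pow_zero, mul_one]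
      nlinarith
    | succ n ih =>
      have h := rb_step hℓ hsol ha ht hat hC hψC hU hL (by positivity) ih
      intro s hs x
      have := h s hs x
      rw [pow_succ]
      linarith
  have hlim : Tendsto (fun n : ℕ => a / (1 - a * t) + C * (1 / 2) ^ n * Real.exp (4 * C * t))
      atTop (nhds (a / (1 - a * t) + C * 0 * Real.exp (4 * C * t))) :=
    (((tendsto_pow_atTop_nhds_zero_of_lt_one (by norm_num) (by norm_num)).const_mul C).mul_const
      _).const_add _
  have := ge_of_tendsto' hlim fun n => hiter n t (right_mem_Icc.2 ht.1) x
  simp only [mul_zero, zero_mul, add_zero] at this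
  linarith

/-- A negative initial slope `h` forces breakdown by time `-2/h`: along the characteristic,
`(1/H)' ≥ 1/2` while `H` stays negative. -/
lemma rb_lifespan {ℓ T : ℝ} (hℓ : 0 < ℓ) {u ut ux uxx Px : ℝ → ℝ → ℝ}
    (hsol : IsClassicalSolRB ℓ T u ut ux uxx Px) {x₀ : ℝ} (hneg : ux 0 x₀ < 0) :
    T ≤ -2 / ux 0 x₀ := by
  by_contra! hlt
  obtain ⟨h, hh⟩ : ∃ h, ux 0 x₀ = h := ⟨_, rfl⟩
  rw [hh] at hneg hlt
  set t := -2 / h with ht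
  have ht0 : 0 ≤ t := div_nonneg_of_nonpos (by norm_num) hneg.le
  have htT : t ∈ Set.Ico 0 T := ⟨ht0, hlt⟩
  obtain ⟨X, hX0, hXc, hX⟩ := rb_slope hℓ hsol htT (left_mem_Icc.2 ht0) x₀
  have hanti := antitoneOn_of_hasDerivWithinAt_nonpos (convex_Icc 0 t) hXc
    (fun s hs => (hX s (by rwa [interior_Icc] at hs)).hasDerivWithinAt)
    (fun s _ => by
      have := rbP_nonneg hℓ ux s (X s)
      nlinarith [sq_nonneg (ux s (X s))])
  have hHneg : ∀ s ∈ Set.Icc 0 t, ux s (X s) < 0 := by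
    intro s hs
    have h1 := hanti (left_mem_Icc.2 ht0) hs hs.1
    simp only [hX0, hh] at h1
    linarith
  have hmono : MonotoneOn (fun s => (ux s (X s))⁻¹ - s / 2) (Set.Icc 0 t) := by
    refine monotoneOn_of_hasDerivWithinAt_nonneg (convex_Icc 0 t)
      (f' := fun s => -(-(ux s (X s) ^ 2) / 2 - rbP ℓ ux s (X s)) / ux s (X s) ^ 2 - 1 / 2)
      ?_ ?_ ?_
    · exact (hXc.inv₀ fun s hs => (hHneg s hs).ne).sub (by fun_prop)
    · intro s hs
      rw [interior_Icc] at hs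
      exact (((hX s hs).fun_inv (hHneg s ⟨hs.1.le, hs.2.le⟩).ne).sub
        ((hasDerivAt_id s).div_const 2)).hasDerivWithinAt
    · intro s hs
      rw [interior_Icc] at hs
      have h1 := hHneg s ⟨hs.1.le, hs.2.le⟩
      have h2 : 0 < ux s (X s) ^ 2 := sq_pos_iff.2 h1.ne
      have h3 := rbP_nonneg hℓ ux s (X s)
      rw [sub_nonneg, le_div_iff₀ h2]
      linarith
  have h1 := hmono (left_mem_Icc.2 ht0) (right_mem_Icc.2 ht0) ht0
  simp only [hX0, hh] at h1
  have h2 : (ux t (X t))⁻¹ < 0 := inv_lt_zero.2 (hHneg t (right_mem_Icc.2 ht0))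
  have h3 : t / 2 = -h⁻¹ := by rw [ht]; field_simp
  rw [h3] at h1
  linarith

/-- **Two-sided bound on the blow-up time** (Theorem 3.6, first case):
if the solution blows up at time `T` (in the sense that `inf_x u_x(t,x) → −∞` as `t ↑ T`),
`m₀ = inf u_0' < 0 < M₀ = sup u_0'` are finite and `|m₀| ≥ M₀`,
then `−1/m₀ ≤ T ≤ −2/m₀`. -/
theorem blowup_time_two_sided (ℓ T : ℝ) (hℓ : 0 < ℓ) (hT : 0 < T)
    (u ut ux uxx Px : ℝ → ℝ → ℝ)
    (hsol : IsClassicalSolRB ℓ T u ut ux uxx Px)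
    (hblow : Filter.Tendsto (fun t => sInf (Set.range fun x => ux t x))
      (nhdsWithin T (Set.Iio T)) Filter.atBot)
    (m₀ M₀ : ℝ)
    (hm₀ : IsGLB (Set.range fun x => ux 0 x) m₀)
    (hM₀ : IsLUB (Set.range fun x => ux 0 x) M₀)
    (hmneg : m₀ < 0) (hMpos : 0 < M₀) (habs : |m₀| ≥ M₀) :
    -1 / m₀ ≤ T ∧ T ≤ -2 / m₀ := by
  have hT2 : T ≤ -2 / m₀ := by
    by_contra! hlt
    -- a point whose initial slope is below `-2/T` already breaks down before `T`
    have h1 : m₀ < -2 / T := by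
      rw [lt_div_iff₀ hT]
      rw [div_lt_iff_of_neg hmneg] at hlt
      linarith
    obtain ⟨_, ⟨x₀, rfl⟩, hx₀⟩ := (isGLB_lt_iff hm₀).1 h1
    have hneg : ux 0 x₀ < 0 := hx₀.trans (div_neg_of_neg_of_pos (by norm_num) hT)
    have h2 := rb_lifespan hℓ hsol hneg
    rw [le_div_iff_of_neg hneg] at h2
    simp only [lt_div_iff₀ hT] at hx₀
    linarith
  refine ⟨?_, hT2⟩
  by_contra! hlt
  obtain ⟨a, rfl⟩ : ∃ a, m₀ = -a := ⟨-m₀, by ring⟩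
  have ha : 0 < a := by linarith
  rw [neg_div_neg_eq, lt_div_iff₀ ha] at hlt
  rw [abs_neg, abs_of_pos ha] at habs
  have hL : ∀ x, -a ≤ ux 0 x := fun x => hm₀.1 ⟨x, rfl⟩
  have hU : ∀ x, ux 0 x ≤ a := fun x => (hM₀.1 ⟨x, rfl⟩).trans habs
  have hev := hblow.eventually (eventually_lt_atBot (-(a / (1 - a * T))))
  have hev2 : ∀ᶠ t in nhdsWithin T (Set.Iio T), t ∈ Set.Ioo 0 T := Ioo_mem_nhdsLT hT
  obtain ⟨t, h1, h2⟩ := (hev.and hev2).exists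
  have haT : a * t ≤ a * T := mul_le_mul_of_nonneg_left h2.2.le ha.le
  have h3 : -(a / (1 - a * T)) ≤ sInf (Set.range fun x => ux t x) := by
    refine le_csInf (Set.range_nonempty _) ?_
    rintro _ ⟨x, rfl⟩
    refine le_trans ?_ (rb_lower hℓ hsol ha ⟨h2.1.le, h2.2⟩ (by linarith) hU hL x)
    have : 0 < 1 - a * T := by linarith
    gcongr
  linarith
end

section
/- Let ℓ > 0 and let v, q : ℝ → ℝ be continuous with q bounded, q ≥ 0, and ξ ↦ q(ξ) sin²(v(ξ)/2) integrable on ℝ. Define P(ξ) = (1/(4ℓ)) ∫_ℝ exp( −(1/ℓ) | ∫_ξ^{ξ'} q(s) cos²(v(s)/2) ds | ) q(ξ') sin²(v(ξ')/2) dξ' and P_x(ξ) = (1/(4ℓ²)) ( ∫_ξ^{+∞} − ∫_{−∞}^{ξ} ) exp( −(1/ℓ) | ∫_ξ^{ξ'} q(s) cos²(v(s)/2) ds | ) q(ξ') sin²(v(ξ')/2) dξ'. Then P and P_x are differentiable and satisfy P'(ξ) = q(ξ) cos²(v(ξ)/2) · P_x(ξ) and ℓ² P_x'(ξ) = q(ξ)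 P(ξ) cos²(v(ξ)/2) − ½ q(ξ) sin²(v(ξ)/2) for all ξ ∈ ℝ. -/
/-!
Write `φ = q cos²(v/2)`, `g = q sin²(v/2)` and `Φ ξ = ∫₀^ξ φ`, a nondecreasing `C¹` function.
The kernel splits at the diagonal: `lagK ℓ v q ξ x` equals `e^{Φ ξ/ℓ} · e^{-Φ x/ℓ} g x` for `x ≥ ξ`
and `e^{-Φ ξ/ℓ} · e^{Φ x/ℓ} g x` for `x ≤ ξ`. Hence the integrals `R` and `L` of the kernel over
`(ξ, ∞)` and `(-∞, ξ)` are each a `C¹` factor times a tail integral of a continuous function of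
`x` alone, and the product rule with the fundamental theorem of calculus gives
`R' = (φ/ℓ) R - g` and `L' = -(φ/ℓ) L + g`. Both identities are linear combinations of these, since
`lagP = (R + L)/(4ℓ)` and `lagPx = (R - L)/(4ℓ²)`.
-/

open MeasureTheory Set Filter

/-- The integrand of the Lagrangian expressions (4.14)–(4.15) for the nonlocal terms of the
regularised Burgers equation. -/
noncomputable def lagK (ℓ : ℝ) (v q : ℝ → ℝ) (ξ ξ' : ℝ) : ℝ :=
  Real.exp (-(1 / ℓ) * |∫ s in ξ..ξ', q s * Real.cos (v s / 2) ^ 2|) *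
    (q ξ' * Real.sin (v ξ' / 2) ^ 2)

/-- The nonlocal term `P` in Lagrangian variables (formula (4.14)). -/
noncomputable def lagP (ℓ : ℝ) (v q : ℝ → ℝ) (ξ : ℝ) : ℝ :=
  (1 / (4 * ℓ)) * ∫ ξ' : ℝ, lagK ℓ v q ξ ξ'

/-- The nonlocal term `P_x` in Lagrangian variables (formula (4.15)). -/
noncomputable def lagPx (ℓ : ℝ) (v q : ℝ → ℝ) (ξ : ℝ) : ℝ :=
  (1 / (4 * ℓ ^ 2)) *
    ((∫ ξ' in Set.Ioi ξ, lagK ℓ v q ξ ξ') - ∫ ξ' in Set.Iio ξ, lagK ℓ v q ξ ξ')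

lemma hasDerivAt_integral_Ioi {h : ℝ → ℝ} (hc : Continuous h)
    (hi : ∀ a, IntegrableOn h (Ioi a)) (x : ℝ) :
    HasDerivAt (fun y => ∫ t in Ioi y, h t) (-h x) x := by
  have e : (fun y => ∫ t in Ioi y, h t) = fun y => (∫ t in Ioi 0, h t) - ∫ t in (0:ℝ)..y, h t := by
    funext y
    rw [← intervalIntegral.integral_Ioi_sub_Ioi' (hi 0) (hi y)]
    ring
  rw [e]
  exact (hc.integral_hasStrictDerivAt 0 x).hasDerivAt.const_sub _

lemma hasDerivAt_integral_Iio {h : ℝ → ℝ} (hc : Continuous h)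
    (hi : ∀ a, IntegrableOn h (Iic a)) (x : ℝ) :
    HasDerivAt (fun y => ∫ t in Iio y, h t) (h x) x := by
  have e : (fun y => ∫ t in Iio y, h t) = fun y => (∫ t in Iic 0, h t) + ∫ t in (0:ℝ)..y, h t := by
    funext y
    rw [← intervalIntegral.integral_Iic_sub_Iic (hi 0) (hi y), ← integral_Iic_eq_integral_Iio]
    ring
  rw [e]
  exact (hc.integral_hasStrictDerivAt 0 x).hasDerivAt.const_add _

section Kernel

variable {ℓ : ℝ} {v q : ℝ → ℝ}

lemma continuous_phi (hv : Continuous v) (hq : Continuous q) :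
    Continuous fun s => q s * Real.cos (v s / 2) ^ 2 := by
  fun_prop

/-- The potential `Φ ξ = ∫₀^ξ q cos²(v/2)`, normalised to vanish at the origin. -/
noncomputable def lagPhi (v q : ℝ → ℝ) (ξ : ℝ) : ℝ :=
  ∫ s in (0:ℝ)..ξ, q s * Real.cos (v s / 2) ^ 2

lemma hasDerivAt_lagPhi (hv : Continuous v) (hq : Continuous q) (ξ : ℝ) :
    HasDerivAt (lagPhi v q) (q ξ * Real.cos (v ξ / 2) ^ 2) ξ :=
  ((continuous_phi hv hq).integral_hasStrictDerivAt 0 ξ).hasDerivAt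

lemma continuous_lagPhi (hv : Continuous v) (hq : Continuous q) : Continuous (lagPhi v q) :=
  continuous_iff_continuousAt.2 fun ξ => (hasDerivAt_lagPhi hv hq ξ).continuousAt

lemma monotone_lagPhi (hv : Continuous v) (hq : Continuous q) (hq0 : ∀ ξ, 0 ≤ q ξ) :
    Monotone (lagPhi v q) :=
  monotone_of_hasDerivAt_nonneg (hasDerivAt_lagPhi hv hq)
    fun ξ => mul_nonneg (hq0 ξ) (sq_nonneg _)

lemma lagK_eq (hv : Continuous v) (hq : Continuous q) (ξ x : ℝ) :
    lagK ℓ v q ξ x = Real.exp (-(1 / ℓ) * |lagPhi v q x - lagPhi v q ξ|) *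
      (q x * Real.sin (v x / 2) ^ 2) := by
  have hi := fun a b => (continuous_phi hv hq).intervalIntegrable (μ := volume) a b
  rw [lagK, lagPhi, lagPhi, intervalIntegral.integral_interval_sub_left (hi _ _) (hi _ _)]

lemma lagK_of_le (hv : Continuous v) (hq : Continuous q) (hq0 : ∀ ξ, 0 ≤ q ξ) {ξ x : ℝ}
    (h : ξ ≤ x) : lagK ℓ v q ξ x = Real.exp (lagPhi v q ξ / ℓ) *
      (Real.exp (-(lagPhi v q x / ℓ)) * (q x * Real.sin (v x / 2) ^ 2)) := by
  rw [lagK_eq hv hq, abs_of_nonneg (sub_nonneg.2 (monotone_lagPhi hv hq hq0 h)),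
    ← mul_assoc (Real.exp _) (Real.exp _), ← Real.exp_add]
  congr 2
  ring

lemma lagK_of_ge (hv : Continuous v) (hq : Continuous q) (hq0 : ∀ ξ, 0 ≤ q ξ) {ξ x : ℝ}
    (h : x ≤ ξ) : lagK ℓ v q ξ x = Real.exp (-(lagPhi v q ξ / ℓ)) *
      (Real.exp (lagPhi v q x / ℓ) * (q x * Real.sin (v x / 2) ^ 2)) := by
  rw [lagK_eq hv hq, abs_of_nonpos (sub_nonpos.2 (monotone_lagPhi hv hq hq0 h)),
    ← mul_assoc (Real.exp _) (Real.exp _), ← Real.exp_add]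
  congr 2
  ring

/-- The exponential factor is at most `1`, so the kernel is dominated by `q sin²(v/2)`. -/
lemma integrable_lagK (hℓ : 0 < ℓ) (hv : Continuous v) (hq : Continuous q)
    (hint : Integrable (fun ξ => q ξ * Real.sin (v ξ / 2) ^ 2)) (ξ : ℝ) :
    Integrable (lagK ℓ v q ξ) := by
  have hP := continuous_lagPhi hv hq
  have hK : Continuous (lagK ℓ v q ξ) := by
    rw [funext (lagK_eq hv hq ξ)]
    fun_prop
  refine hint.mono hK.aestronglyMeasurable (Eventually.of_forall fun x => ?_)
  rw [lagK, norm_mul, Real.norm_of_nonneg (Real.exp_pos _).le]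
  refine mul_le_of_le_one_left (norm_nonneg _) (Real.exp_le_one_iff.2 ?_)
  rw [neg_mul]
  exact neg_nonpos.2 (by positivity)

lemma hasDerivAt_right (hℓ : 0 < ℓ) (hv : Continuous v) (hq : Continuous q)
    (hq0 : ∀ ξ, 0 ≤ q ξ) (hint : Integrable (fun ξ => q ξ * Real.sin (v ξ / 2) ^ 2)) (ξ : ℝ) :
    HasDerivAt (fun y => ∫ x in Ioi y, lagK ℓ v q y x)
      (q ξ * Real.cos (v ξ / 2) ^ 2 / ℓ * (∫ x in Ioi ξ, lagK ℓ v q ξ x)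
        - q ξ * Real.sin (v ξ / 2) ^ 2) ξ := by
  have hP := continuous_lagPhi hv hq
  set h : ℝ → ℝ := fun x =>
    Real.exp (-(lagPhi v q x / ℓ)) * (q x * Real.sin (v x / 2) ^ 2) with hh
  have hc : Continuous h := by fun_prop
  have hi : ∀ a, IntegrableOn h (Ioi a) := fun a => by
    refine IntegrableOn.congr_fun (((integrable_lagK hℓ hv hq hint a).const_mul
      (Real.exp (-(lagPhi v q a / ℓ)))).integrableOn) (fun x hx => ?_) measurableSet_Ioi
    simp only [lagK_of_le hv hq hq0 (le_of_lt hx), hh]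
    rw [← mul_assoc, ← Real.exp_add, neg_add_cancel, Real.exp_zero, one_mul]
  have e : ∀ y, ∫ x in Ioi y, lagK ℓ v q y x =
      Real.exp (lagPhi v q y / ℓ) * ∫ x in Ioi y, h x := fun y => by
    rw [← integral_const_mul]
    exact setIntegral_congr_fun measurableSet_Ioi fun x hx => lagK_of_le hv hq hq0 (le_of_lt hx)
  simp only [e]
  refine (((hasDerivAt_lagPhi hv hq ξ).div_const ℓ).exp.mul
    (hasDerivAt_integral_Ioi hc hi ξ)).congr_deriv ?_
  have h1 : Real.exp (lagPhi v q ξ / ℓ) * h ξ = q ξ * Real.sin (v ξ / 2) ^ 2 := by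
    rw [hh, ← mul_assoc, ← Real.exp_add, add_neg_cancel, Real.exp_zero, one_mul]
  linear_combination -h1

lemma hasDerivAt_left (hℓ : 0 < ℓ) (hv : Continuous v) (hq : Continuous q)
    (hq0 : ∀ ξ, 0 ≤ q ξ) (hint : Integrable (fun ξ => q ξ * Real.sin (v ξ / 2) ^ 2)) (ξ : ℝ) :
    HasDerivAt (fun y => ∫ x in Iio y, lagK ℓ v q y x)
      (-(q ξ * Real.cos (v ξ / 2) ^ 2 / ℓ) * (∫ x in Iio ξ, lagK ℓ v q ξ x)
        + q ξ * Real.sin (v ξ / 2) ^ 2) ξ := by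
  have hP := continuous_lagPhi hv hq
  set h : ℝ → ℝ := fun x =>
    Real.exp (lagPhi v q x / ℓ) * (q x * Real.sin (v x / 2) ^ 2) with hh
  have hc : Continuous h := by fun_prop
  have hi : ∀ a, IntegrableOn h (Iic a) := fun a => by
    refine IntegrableOn.congr_fun (((integrable_lagK hℓ hv hq hint a).const_mul
      (Real.exp (lagPhi v q a / ℓ))).integrableOn) (fun x hx => ?_) measurableSet_Iic
    simp only [lagK_of_ge hv hq hq0 hx, hh]
    rw [← mul_assoc, ← Real.exp_add, add_neg_cancel, Real.exp_zero, one_mul]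
  have e : ∀ y, ∫ x in Iio y, lagK ℓ v q y x =
      Real.exp (-(lagPhi v q y / ℓ)) * ∫ x in Iio y, h x := fun y => by
    rw [← integral_const_mul]
    exact setIntegral_congr_fun measurableSet_Iio fun x hx => lagK_of_ge hv hq hq0 (le_of_lt hx)
  simp only [e]
  refine (((hasDerivAt_lagPhi hv hq ξ).div_const ℓ).neg.exp.mul
    (hasDerivAt_integral_Iio hc hi ξ)).congr_deriv ?_
  have h1 : Real.exp (-(lagPhi v q ξ / ℓ)) * h ξ = q ξ * Real.sin (v ξ / 2) ^ 2 := by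
    rw [hh, ← mul_assoc, ← Real.exp_add, neg_add_cancel, Real.exp_zero, one_mul]
  simp only [Pi.neg_apply]
  linear_combination h1

lemma lagP_eq (hℓ : 0 < ℓ) (hv : Continuous v) (hq : Continuous q)
    (hint : Integrable (fun ξ => q ξ * Real.sin (v ξ / 2) ^ 2)) (ξ : ℝ) :
    lagP ℓ v q ξ = (1 / (4 * ℓ)) *
      ((∫ x in Ioi ξ, lagK ℓ v q ξ x) + ∫ x in Iio ξ, lagK ℓ v q ξ x) := by
  have hK := integrable_lagK hℓ hv hq hint ξ
  rw [lagP, ← intervalIntegral.integral_Iic_add_Ioi (b := ξ) hK.integrableOn hK.integrableOn,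
    integral_Iic_eq_integral_Iio, add_comm]

end Kernel

/-- **Differentiation identities for the Lagrangian nonlocal terms** (equations (4.26)):
`P' = q cos²(v/2) P_x` and `ℓ² P_x' = q P cos²(v/2) − ½ q sin²(v/2)`. -/
theorem lagrangian_P_derivatives (ℓ : ℝ) (hℓ : 0 < ℓ) (v q : ℝ → ℝ)
    (hv : Continuous v) (hq : Continuous q)
    (hqb : ∃ C : ℝ, ∀ ξ, q ξ ≤ C) (hq0 : ∀ ξ, 0 ≤ q ξ)
    (hint : MeasureTheory.Integrable (fun ξ => q ξ * Real.sin (v ξ / 2) ^ 2)) :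
    ∀ ξ : ℝ,
      HasDerivAt (lagP ℓ v q) (q ξ * Real.cos (v ξ / 2) ^ 2 * lagPx ℓ v q ξ) ξ ∧
      ∃ D : ℝ, HasDerivAt (lagPx ℓ v q) D ξ ∧
        ℓ ^ 2 * D =
          q ξ * lagP ℓ v q ξ * Real.cos (v ξ / 2) ^ 2 - q ξ * Real.sin (v ξ / 2) ^ 2 / 2 := by
  intro ξ
  have hR := hasDerivAt_right hℓ hv hq hq0 hint ξ
  have hL := hasDerivAt_left hℓ hv hq hq0 hint ξ
  refine ⟨?_, _, (hR.sub hL).const_mul (1 / (4 * ℓ ^ 2)), ?_⟩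
  · rw [funext (lagP_eq hℓ hv hq hint)]
    refine ((hR.add hL).const_mul (1 / (4 * ℓ))).congr_deriv ?_
    rw [lagPx]
    field_simp
    ring
  · rw [lagP_eq hℓ hv hq hint]
    field_simp
    ring
end
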